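/- The tetrahedral cone T is a stationary 2-varifold in ℝ³: for every compactly supported continuously differentiable vector field Y : ℝ³ → ℝ³ one has ∑_{a<b} ∫_{W(ab)} div_{P(ab)} Y dH² = 0, where for a 2-plane P the tangential divergence is div_P Y(x) = e₁·(D_{e₁}Y)(x) + e₂·(D_{e₂}Y)(x) for an orthonormal basis (e₁, e₂) of P, and H² is 2-dimensional Hausdorff measure. -/

import Mathlib

/-!
STATEMENT 0: The tetrahedral cone `T ⊂ ℝ³` is a stationary 2-varifold: for every compactly
supported `C¹` vector field `Y : ℝ³ → ℝ³`,
`∑_{a<b} ∫_{W(ab)} div_{P(ab)} Y dH² = 0`,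
where for the 2-plane `P(ab)` the tangential divergence is computed with respect to the
orthonormal basis `(tp a, tang a b)` of `P(ab)`, and `H²` is 2-dimensional Hausdorff measure.
-/

noncomputable section

open Real MeasureTheory Metric
open scoped RealInnerProductSpace

/-- Euclidean 3-space. -/
abbrev E3 : Type := EuclideanSpace ℝ (Fin 3)

/-- The four vertices of the tetrahedral net. -/
def tp : Fin 4 → E3
  | 0 => (EuclideanSpace.equiv (Fin 3) ℝ).symm ![1, 0, 0]
  | 1 => (EuclideanSpace.equiv (Fin 3) ℝ).symm ![-1/3, 2 * Real.sqrt 2 / 3, 0]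
  | 2 => (EuclideanSpace.equiv (Fin 3) ℝ).symm ![-1/3, -Real.sqrt 2 / 3, Real.sqrt 6 / 3]
  | 3 => (EuclideanSpace.equiv (Fin 3) ℝ).symm ![-1/3, -Real.sqrt 2 / 3, -Real.sqrt 6 / 3]

/-- The wedge `W(ab) = {s • p_a + t • p_b : s, t ≥ 0}`. -/
def Wdg (a b : Fin 4) : Set E3 := {x | ∃ s t : ℝ, 0 ≤ s ∧ 0 ≤ t ∧ x = s • tp a + t • tp b}

/-- Unit tangent at `tp a` to the arc towards `tp b`; `(tp a, tang a b)` is an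
orthonormal basis of the plane `P(ab) = span(p_a, p_b)`. -/
def tang (a b : Fin 4) : E3 := (2 * Real.sqrt 2)⁻¹ • (tp a + (3:ℝ) • tp b)

/-- The tangential divergence of `Y` along the plane `P(ab)`, computed with the orthonormal
basis `(tp a, tang a b)` of `P(ab)`:  `div_P Y(x) = e₁·(D_{e₁}Y)(x) + e₂·(D_{e₂}Y)(x)`. -/
def divP (a b : Fin 4) (Y : E3 → E3) (x : E3) : ℝ :=
  ⟪tp a, fderiv ℝ Y x (tp a)⟫ + ⟪tang a b, fderiv ℝ Y x (tang a b)⟫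

/-!
An integral over a planar sector becomes, in the coordinates `(s, t) ↦ s • u + t • v`, an integral
over a quadrant, and there the fundamental theorem of calculus reduces it to the two boundary rays:
the sector spanned by unit vectors `u`, `v` has first variation
`-∫₀^∞ ⟪ν, Y (s • u)⟫ ds - ∫₀^∞ ⟪ν', Y (t • v)⟫ dt`, where `ν` and `ν'` are its inward unit
conormals along the rays through `u` and `v`.  Hence a cone over a geodesic net is stationary as
soon as the conormals of the sectors meeting along each ray add up to zero.  For the tetrahedral net
the conormal of `W(ab)` along `L(a)` is a multiple of `p_a + 3 • p_b`, and
`∑_{b ≠ a} (p_a + 3 • p_b) = 3 • ∑_b p_b = 0`.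
-/

open Set Module Function

variable {E F : Type*} [NormedAddCommGroup E] [InnerProductSpace ℝ E]

section Hausdorff

variable [MeasurableSpace E] [BorelSpace E] [NormedAddCommGroup F] [NormedSpace ℝ F]

theorem setIntegral_hausdorffMeasure_natCast {X : Type*} [EMetricSpace X] [MeasurableSpace X]
    [BorelSpace X] (d : ℕ) (s : Set X) (g : X → F) :
    ∫ x in s, g x ∂μH[d] =
      (Measure.addHaarScalarFactor (volume : Measure (EuclideanSpace ℝ (Fin d))) μH[d])⁻¹ •
        ∫ x in s, g x ∂μHE[d] := by
  rw [Measure.euclideanHausdorffMeasure_def, Measure.restrict_smul, integral_smul_nnreal_measure,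
    inv_smul_smul₀ (Measure.addHaarScalarFactor_volume_hausdorffMeasure_ne_zero d)]

theorem setIntegral_image_linearMap_euclideanHausdorffMeasure {U : Type*} [NormedAddCommGroup U]
    [InnerProductSpace ℝ U] [FiniteDimensional ℝ U] [MeasurableSpace U] [BorelSpace U]
    {f : U →ₗ[ℝ] E} (hf : Injective f) (s : Set U) (g : E → F) :
    ∫ x in f '' s, g x ∂μHE[finrank ℝ U] = f.normDet • ∫ x in s, g (f x) := by
  have hemb : MeasurableEmbedding f :=
    (LinearMap.isClosedEmbedding_of_injective (LinearMap.ker_eq_bot.2 hf)).measurableEmbedding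
  have hcomap : (μHE[finrank ℝ U] : Measure E).comap f =
      ENNReal.ofReal f.normDet • (volume : Measure U) := by
    ext t -
    rw [hemb.comap_apply, f.euclideanHausdorffMeasure_image_eq_normDet_mul_volume,
      Measure.smul_apply, smul_eq_mul]
  rw [← Measure.restrict_restrict_of_subset (image_subset_range f s), ← hemb.map_comap,
    hemb.setIntegral_map, preimage_image_eq s hf, hcomap, Measure.restrict_smul,
    integral_smul_measure, ENNReal.toReal_ofReal f.normDet_nonneg]

end Hausdorff

section PlaneParam

/-- The linear parametrization `(s, t) ↦ s • u + t • v` of the plane spanned by `u` and `v`. -/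
def planeParam (u v : E) : ℝ × ℝ →L[ℝ] E :=
  (ContinuousLinearMap.toSpanSingleton ℝ u).coprod (ContinuousLinearMap.toSpanSingleton ℝ v)

@[simp]
theorem planeParam_apply (u v : E) (z : ℝ × ℝ) : planeParam u v z = z.1 • u + z.2 • v := by
  simp [planeParam]

/-- `planeParam` on the Euclidean plane instead of `ℝ × ℝ`, whose norm is the sup norm. -/
def euclideanPlaneParam (u v : E) : EuclideanSpace ℝ (Fin 2) →ₗ[ℝ] E :=
  Fintype.linearCombination ℝ ![u, v] ∘ₗ (WithLp.linearEquiv 2 ℝ (Fin 2 → ℝ)).toLinearMap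

theorem euclideanPlaneParam_apply (u v : E) (w : EuclideanSpace ℝ (Fin 2)) :
    euclideanPlaneParam u v w = planeParam u v (w 0, w 1) := by
  simp [euclideanPlaneParam, Fintype.linearCombination_apply]

theorem normDet_euclideanPlaneParam (u v : E) :
    (euclideanPlaneParam u v).normDet = √(‖u‖ ^ 2 * ‖v‖ ^ 2 - ⟪u, v⟫ ^ 2) := by
  have hsq := (euclideanPlaneParam u v).normDet_sq_eq_det_gram (EuclideanSpace.basisFun (Fin 2) ℝ)
  rw [← Real.sqrt_sq (LinearMap.normDet_nonneg _)]
  congr 1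
  simpa [Matrix.det_fin_two, Matrix.gram_apply, euclideanPlaneParam_apply,
    real_inner_comm u v, ← sq] using hsq

theorem injective_planeParam {u v : E} (huv : |⟪u, v⟫| < ‖u‖ * ‖v‖) :
    Injective (planeParam u v) := by
  have hdet : (euclideanPlaneParam u v).normDet ≠ 0 := by
    rw [normDet_euclideanPlaneParam, Real.sqrt_ne_zero', sub_pos, ← mul_pow]
    exact sq_lt_sq.2 (huv.trans_le (le_abs_self _))
  have hinj : Injective (euclideanPlaneParam u v) :=
    ((euclideanPlaneParam u v).normDet_ne_zero_tfae.out 0 4).mp hdet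
  intro z z' h
  have hz : !₂[z.1, z.2] = !₂[z'.1, z'.2] := hinj (by simpa [euclideanPlaneParam_apply] using h)
  exact Prod.ext (congrArg (· 0) hz) (congrArg (· 1) hz)

variable [MeasurableSpace E] [BorelSpace E] [NormedAddCommGroup F] [NormedSpace ℝ F]

theorem setIntegral_image_planeParam_euclideanHausdorffMeasure {u v : E}
    (huv : Injective (planeParam u v)) (s : Set (ℝ × ℝ)) (g : E → F) :
    ∫ x in planeParam u v '' s, g x ∂μHE[2] =
      √(‖u‖ ^ 2 * ‖v‖ ^ 2 - ⟪u, v⟫ ^ 2) • ∫ z in s, g (planeParam u v z) := by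
  let e : EuclideanSpace ℝ (Fin 2) ≃ᵐ ℝ × ℝ :=
    (MeasurableEquiv.toLp 2 (Fin 2 → ℝ)).symm.trans MeasurableEquiv.finTwoArrow
  have he : MeasurePreserving e :=
    (volume_preserving_finTwoArrow ℝ).comp (PiLp.volume_preserving_ofLp (Fin 2))
  have hcomp : ⇑(euclideanPlaneParam u v) = planeParam u v ∘ e :=
    funext (euclideanPlaneParam_apply u v)
  have hinj : Injective (euclideanPlaneParam u v) := hcomp ▸ huv.comp e.injective
  have harea := setIntegral_image_linearMap_euclideanHausdorffMeasure hinj (e ⁻¹' s) g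
  rw [finrank_euclideanSpace_fin, normDet_euclideanPlaneParam, hcomp, image_comp,
    image_preimage_eq s e.surjective] at harea
  rw [harea, ← he.setIntegral_preimage_emb e.measurableEmbedding]
  rfl

end PlaneParam

section Quadrant

variable [NormedAddCommGroup F] [NormedSpace ℝ F] {g h : ℝ × ℝ → F}

theorem integrable_fderiv_apply_of_hasCompactSupport {V : Type*} [NormedAddCommGroup V]
    [NormedSpace ℝ V] [MeasurableSpace V] [OpensMeasurableSpace V] {μ : Measure V}
    [IsFiniteMeasureOnCompacts μ] {f : V → F} (hf : ContDiff ℝ 1 f) (hfc : HasCompactSupport f)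
    (w : V) : Integrable (fun z ↦ fderiv ℝ f z w) μ :=
  ((hf.continuous_fderiv one_ne_zero).clm_apply continuous_const).integrable_of_hasCompactSupport
    (hfc.fderiv_apply (𝕜 := ℝ) w)

variable [CompleteSpace F]

theorem setIntegral_quadrant_fderiv_snd (hg : ContDiff ℝ 1 g) (hgc : HasCompactSupport g) :
    ∫ z in Ici (0 : ℝ) ×ˢ Ici (0 : ℝ), fderiv ℝ g z (0, 1) = -∫ s in Ioi (0 : ℝ), g (s, 0) := by
  have hline (s : ℝ) : ∫ t in Ici (0 : ℝ), fderiv ℝ g (s, t) (0, 1) = -g (s, 0) := by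
    have hderiv (t : ℝ) : deriv (fun t ↦ g (s, t)) t = fderiv ℝ g (s, t) (0, 1) :=
      ((hg.differentiable one_ne_zero (s, t)).hasFDerivAt.comp_hasDerivAt t
        ((hasDerivAt_const t s).prodMk (hasDerivAt_id t))).deriv
    have hsupp : HasCompactSupport (fun t ↦ g (s, t)) :=
      hgc.comp_isClosedEmbedding
        (Isometry.of_dist_eq fun x y ↦ by simp [Prod.dist_eq]).isClosedEmbedding
    have hcont : ContDiff ℝ 1 (fun t ↦ g (s, t)) := hg.comp (by fun_prop)
    simp only [← hderiv, integral_Ici_eq_integral_Ioi, hsupp.integral_Ioi_deriv_eq hcont]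
  rw [Measure.volume_eq_prod,
    setIntegral_prod _ (integrable_fderiv_apply_of_hasCompactSupport hg hgc _).integrableOn]
  simp only [hline, integral_neg, integral_Ici_eq_integral_Ioi]

theorem setIntegral_quadrant_fderiv_fst (hg : ContDiff ℝ 1 g) (hgc : HasCompactSupport g) :
    ∫ z in Ici (0 : ℝ) ×ˢ Ici (0 : ℝ), fderiv ℝ g z (1, 0) = -∫ t in Ioi (0 : ℝ), g (0, t) := by
  let σ : (ℝ × ℝ) ≃L[ℝ] ℝ × ℝ := ContinuousLinearEquiv.prodComm ℝ ℝ ℝ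
  have hswap (z : ℝ × ℝ) : fderiv ℝ (g ∘ σ) z (0, 1) = fderiv ℝ g z.swap (1, 0) := by
    rw [σ.comp_right_fderiv]
    rfl
  rw [Measure.volume_eq_prod, ← setIntegral_prod_swap]
  simp only [← hswap]
  exact setIntegral_quadrant_fderiv_snd (hg.comp σ.contDiff) (hgc.comp_homeomorph σ.toHomeomorph)

theorem setIntegral_quadrant_divergence (hg : ContDiff ℝ 1 g) (hgc : HasCompactSupport g)
    (hh : ContDiff ℝ 1 h) (hhc : HasCompactSupport h) :
    ∫ z in Ici (0 : ℝ) ×ˢ Ici (0 : ℝ), (fderiv ℝ g z (1, 0) + fderiv ℝ h z (0, 1)) =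
      -((∫ s in Ioi (0 : ℝ), h (s, 0)) + ∫ t in Ioi (0 : ℝ), g (0, t)) := by
  rw [integral_add (integrable_fderiv_apply_of_hasCompactSupport hg hgc _).integrableOn
    (integrable_fderiv_apply_of_hasCompactSupport hh hhc _).integrableOn,
    setIntegral_quadrant_fderiv_fst hg hgc, setIntegral_quadrant_fderiv_snd hh hhc]
  abel

end Quadrant

section Sector

/-- The convex planar sector bounded by the rays through `u` and `v`. -/
def sector (u v : E) : Set E :=
  planeParam u v '' (Ici 0 ×ˢ Ici 0)

/-- The unit conormal along the ray through the unit vector `u` of the sector spanned by `u` and the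
unit vector `v`, pointing into the sector: the normalized component of `v` orthogonal to `u`. -/
def conormal (u v : E) : E :=
  (√(1 - ⟪u, v⟫ ^ 2))⁻¹ • (v - ⟪u, v⟫ • u)

/-- The divergence of `Y` along the plane with orthonormal basis `(e, f)`. -/
def tangentialDiv (e f : E) (Y : E → E) (x : E) : ℝ :=
  ⟪e, fderiv ℝ Y x e⟫ + ⟪f, fderiv ℝ Y x f⟫

variable {u v : E} {Y : E → E}

theorem sqrt_mul_tangentialDiv_conormal (huv : |⟪u, v⟫| < 1) (Y : E → E) (x : E) :
    √(1 - ⟪u, v⟫ ^ 2) * tangentialDiv u (conormal u v) Y x =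
      ⟪conormal v u, fderiv ℝ Y x u⟫ + ⟪conormal u v, fderiv ℝ Y x v⟫ := by
  have hpos : 0 < 1 - ⟪u, v⟫ ^ 2 := sub_pos.2 (sq_lt_one_iff_abs_lt_one _ |>.2 huv)
  have hsq := Real.sq_sqrt hpos.le
  have hne := (Real.sqrt_pos.2 hpos).ne'
  simp only [tangentialDiv, conormal, real_inner_comm u v, map_smul, map_sub, inner_smul_left,
    inner_smul_right, inner_sub_left, inner_sub_right, RCLike.conj_to_real]
  field_simp
  linear_combination ⟪u, fderiv ℝ Y x u⟫ * hsq

theorem isClosedEmbedding_planeParam (huv : Injective (planeParam u v)) :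
    Topology.IsClosedEmbedding (planeParam u v) :=
  LinearMap.isClosedEmbedding_of_injective (f := (planeParam u v).toLinearMap)
    (LinearMap.ker_eq_bot.2 huv)

theorem fderiv_inner_comp_planeParam (hY : Differentiable ℝ Y) (w : E) (z d : ℝ × ℝ) :
    fderiv ℝ (fun z ↦ ⟪w, Y (planeParam u v z)⟫) z d =
      ⟪w, fderiv ℝ Y (planeParam u v z) (planeParam u v d)⟫ := by
  have hcomp := (hY _).hasFDerivAt.comp z (planeParam u v).hasFDerivAt
  exact DFunLike.congr_fun ((innerSL ℝ w).hasFDerivAt.comp z hcomp).fderiv d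

theorem setIntegral_sector_tangentialDiv [MeasurableSpace E] [BorelSpace E]
    (hu : ‖u‖ = 1) (hv : ‖v‖ = 1) (huv : |⟪u, v⟫| < 1)
    (hY : ContDiff ℝ 1 Y) (hYc : HasCompactSupport Y) :
    ∫ x in sector u v, tangentialDiv u (conormal u v) Y x ∂μHE[2] =
      -((∫ s in Ioi (0 : ℝ), ⟪conormal u v, Y (s • u)⟫) +
        ∫ t in Ioi (0 : ℝ), ⟪conormal v u, Y (t • v)⟫) := by
  have hinj : Injective (planeParam u v) := injective_planeParam (by simpa [hu, hv] using huv)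
  let g (w : E) (z : ℝ × ℝ) : ℝ := ⟪w, Y (planeParam u v z)⟫
  have hg (w : E) : ContDiff ℝ 1 (g w) :=
    contDiff_const.inner ℝ (hY.comp (planeParam u v).contDiff)
  have hgc (w : E) : HasCompactSupport (g w) :=
    (hYc.comp_isClosedEmbedding (isClosedEmbedding_planeParam hinj)).comp_left (inner_zero_right w)
  have hdiv (z : ℝ × ℝ) :
      √(1 - ⟪u, v⟫ ^ 2) * tangentialDiv u (conormal u v) Y (planeParam u v z) =
        fderiv ℝ (g (conormal v u)) z (1, 0) + fderiv ℝ (g (conormal u v)) z (0, 1) := by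
    simp only [g, fderiv_inner_comp_planeParam (hY.differentiable one_ne_zero),
      sqrt_mul_tangentialDiv_conormal huv]
    simp
  rw [sector, setIntegral_image_planeParam_euclideanHausdorffMeasure hinj, hu, hv, smul_eq_mul,
    ← integral_const_mul]
  simp only [one_pow, mul_one, hdiv]
  rw [setIntegral_quadrant_divergence (hg _) (hgc _) (hg _) (hgc _)]
  simp [g]

end Sector

section Net

theorem sum_ite_lt_and_adj {ι M : Type*} [Fintype ι] [LinearOrder ι] [AddCommMonoid M]
    (G : SimpleGraph ι) [DecidableRel G.Adj] (A : ι → ι → M) :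
    ∑ a, ∑ b, (if a < b ∧ G.Adj a b then A a b + A b a else 0) =
      ∑ a, ∑ b ∈ G.neighborFinset a, A a b := by
  have hsplit (a b : ι) : (if G.Adj a b then A a b else 0) =
      (if a < b ∧ G.Adj a b then A a b else 0) + if b < a ∧ G.Adj b a then A a b else 0 := by
    rcases lt_trichotomy a b with h | rfl | h
    · simp [h, h.not_gt]
    · simp
    · simp [h, h.not_gt, G.adj_comm a b]
  have hswap : ∑ a, ∑ b, (if a < b ∧ G.Adj a b then A b a else 0) =
      ∑ a, ∑ b, if b < a ∧ G.Adj b a then A a b else 0 := Finset.sum_comm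
  simp only [SimpleGraph.neighborFinset_eq_filter, Finset.sum_filter, hsplit,
    Finset.sum_add_distrib, ← hswap, ite_add_zero]

variable {ι : Type*} [Fintype ι] [LinearOrder ι] {Y : E → E}

theorem integrable_inner_comp_smul_of_hasCompactSupport (hY : Continuous Y)
    (hYc : HasCompactSupport Y) {u : E} (hu : u ≠ 0) (w : E) :
    Integrable (fun s : ℝ ↦ ⟪w, Y (s • u)⟫) :=
  Continuous.integrable_of_hasCompactSupport (by fun_prop)
    ((hYc.comp_isClosedEmbedding (isClosedEmbedding_smul_left hu)).comp_left (inner_zero_right w))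

theorem sum_setIntegral_inner_smul_eq_zero {κ : Type*} {N : Finset κ} {w : κ → E}
    (hw : ∑ b ∈ N, w b = 0) (hY : Continuous Y) (hYc : HasCompactSupport Y) {u : E} (hu : u ≠ 0)
    (I : Set ℝ) : ∑ b ∈ N, ∫ s in I, ⟪w b, Y (s • u)⟫ = 0 := by
  rw [← integral_finsetSum _ fun b _ ↦
    (integrable_inner_comp_smul_of_hasCompactSupport hY hYc hu (w b)).integrableOn]
  simp only [← sum_inner, hw, inner_zero_left, integral_zero]

variable [MeasurableSpace E] [BorelSpace E] (G : SimpleGraph ι) [DecidableRel G.Adj]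

theorem sum_setIntegral_sector_euclideanHausdorffMeasure_eq_zero {p : ι → E}
    (hp : ∀ a, ‖p a‖ = 1) (hadj : ∀ a b, G.Adj a b → |⟪p a, p b⟫| < 1)
    (hbal : ∀ a, ∑ b ∈ G.neighborFinset a, conormal (p a) (p b) = 0)
    (hY : ContDiff ℝ 1 Y) (hYc : HasCompactSupport Y) :
    ∑ a, ∑ b, (if a < b ∧ G.Adj a b then
      ∫ x in sector (p a) (p b), tangentialDiv (p a) (conormal (p a) (p b)) Y x ∂μHE[2]
      else 0) = 0 := by
  let ray (a b : ι) : ℝ := -∫ s in Ioi (0 : ℝ), ⟪conormal (p a) (p b), Y (s • p a)⟫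
  have hray (a : ι) : ∑ b ∈ G.neighborFinset a, ray a b = 0 := by
    have hpa : p a ≠ 0 := ne_zero_of_norm_ne_zero (by simp [hp a])
    rw [Finset.sum_neg_distrib,
      sum_setIntegral_inner_smul_eq_zero (hbal a) hY.continuous hYc hpa, neg_zero]
  calc
    _ = ∑ a, ∑ b, if a < b ∧ G.Adj a b then ray a b + ray b a else 0 := by
      refine Finset.sum_congr rfl fun a _ ↦ Finset.sum_congr rfl fun b _ ↦ if_ctx_congr Iff.rfl
        (fun hab ↦ ?_) fun _ ↦ rfl
      rw [setIntegral_sector_tangentialDiv (hp a) (hp b) (hadj a b hab.2) hY hYc, neg_add]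
    _ = ∑ a, ∑ b ∈ G.neighborFinset a, ray a b := sum_ite_lt_and_adj G ray
    _ = 0 := Finset.sum_eq_zero fun a _ ↦ hray a

theorem tetrahedral_cone_is_stationary_general {p : ι → E}
    (hp : ∀ a, ‖p a‖ = 1) (hadj : ∀ a b, G.Adj a b → |⟪p a, p b⟫| < 1)
    (hbal : ∀ a, ∑ b ∈ G.neighborFinset a, conormal (p a) (p b) = 0)
    (hY : ContDiff ℝ 1 Y) (hYc : HasCompactSupport Y) :
    ∑ a, ∑ b, (if a < b ∧ G.Adj a b then
      ∫ x in sector (p a) (p b), tangentialDiv (p a) (conormal (p a) (p b)) Y x ∂μH[2]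
      else 0) = 0 := by
  have hμ := setIntegral_hausdorffMeasure_natCast (X := E) (F := ℝ) 2
  simp only [Nat.cast_ofNat] at hμ
  simp only [hμ, ← smul_ite_zero, ← Finset.smul_sum,
    sum_setIntegral_sector_euclideanHausdorffMeasure_eq_zero G hp hadj hbal hY hYc, smul_zero]

end Net

section Tetrahedron

theorem inner_tp (a b : Fin 4) : ⟪tp a, tp b⟫ = if a = b then 1 else -1 / 3 := by
  have h2 : √2 ^ 2 = 2 := Real.sq_sqrt zero_le_two
  have h6 : √6 ^ 2 = 6 := Real.sq_sqrt (by norm_num)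
  simp only [PiLp.inner_apply, RCLike.inner_apply, conj_trivial, Fin.sum_univ_three]
  fin_cases a <;> fin_cases b <;> simp [tp] <;> nlinarith only [h2, h6]

theorem norm_tp (a : Fin 4) : ‖tp a‖ = 1 := by
  rw [norm_eq_sqrt_real_inner, inner_tp, if_pos rfl, Real.sqrt_one]

theorem sum_tp : ∑ a, tp a = 0 := by
  ext i
  fin_cases i <;> simp [tp, Fin.sum_univ_four] <;> ring

theorem abs_inner_tp_lt_one {a b : Fin 4} (hab : a ≠ b) : |⟪tp a, tp b⟫| < 1 := by
  rw [inner_tp, if_neg hab]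
  norm_num [abs_lt]

theorem conormal_tp {a b : Fin 4} (hab : a ≠ b) : conormal (tp a) (tp b) = tang a b := by
  have hsqrt : √(1 - (-1 / 3) ^ 2 : ℝ) = 2 * √2 / 3 := by
    rw [Real.sqrt_eq_iff_eq_sq (by norm_num) (by positivity)]
    linear_combination (-4 / 9 : ℝ) * Real.sq_sqrt zero_le_two
  rw [conormal, inner_tp, if_neg hab, hsqrt, tang]
  module

theorem sum_conormal_tp (a : Fin 4) :
    ∑ b ∈ (⊤ : SimpleGraph (Fin 4)).neighborFinset a, conormal (tp a) (tp b) = 0 := by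
  have hothers : ∑ b ∈ {a}ᶜ, tp b = -tp a :=
    eq_neg_of_add_eq_zero_left <| by
      rw [← Finset.sum_singleton tp a, Finset.sum_compl_add_sum, sum_tp]
  calc
    _ = ∑ b ∈ {a}ᶜ, tang a b := by
      rw [SimpleGraph.neighborFinset_top]
      exact Finset.sum_congr rfl fun b hb ↦ conormal_tp (by simpa [eq_comm] using hb)
    _ = (2 * √2)⁻¹ • ((3 : ℝ) • tp a + (3 : ℝ) • ∑ b ∈ {a}ᶜ, tp b) := by
      simp only [tang, ← Finset.smul_sum, Finset.sum_add_distrib, Finset.sum_const,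
        Finset.card_compl, Finset.card_singleton, Fintype.card_fin, ← Nat.cast_smul_eq_nsmul ℝ]
      norm_num
    _ = 0 := by rw [hothers, smul_neg, add_neg_cancel, smul_zero]

theorem sector_tp (a b : Fin 4) : sector (tp a) (tp b) = Wdg a b := by
  ext x
  simp [sector, Wdg, Prod.exists, and_assoc, eq_comm]

end Tetrahedron

/-- The tetrahedral cone is stationary: the first variation of the 2-dimensional Hausdorff
measure of `T = ⋃_{a<b} W(ab)` vanishes for every compactly supported `C¹` vector field. -/
theorem tetrahedral_cone_is_stationary
    (Y : E3 → E3) (hY : ContDiff ℝ 1 Y) (hYc : HasCompactSupport Y) :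
    ∑ a : Fin 4, ∑ b : Fin 4,
      (if a < b then ∫ x in Wdg a b, divP a b Y x ∂μH[2] else 0) = 0 := by
  refine Eq.trans ?_ <| tetrahedral_cone_is_stationary_general (⊤ : SimpleGraph (Fin 4)) norm_tp
    (fun _ _ ↦ abs_inner_tp_lt_one) sum_conormal_tp hY hYc
  refine Finset.sum_congr rfl fun a _ ↦ Finset.sum_congr rfl fun b _ ↦ ?_
  by_cases hab : a < b
  · rw [if_pos hab, if_pos ⟨hab, hab.ne⟩, sector_tp, conormal_tp hab.ne]
    rfl
  · rw [if_neg hab, if_neg (hab ·.1)]
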